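/- Let m ≥ 1 and let λ₁,…,λ_m, x₁,…,x_m, y₁,…,y_m be complex numbers with |λ_i| < 1 and |y_i| < |x_i| for each i, and |x₁⋯x_m| < 1. Then ∑_{n=0}^∞ (∏_{i=1}^m x_i^{n+1}/(x_i − λ_i^n y_i)) = ∑_{(k₁,…,k_m) ∈ ℕ^m} (∏_{i=1}^m (y_i/x_i)^{k_i}) · 1/(1 − λ₁^{k₁}⋯λ_m^{k_m} x₁⋯x_m), where the right-hand side is an absolutely convergent sum over ℕ^m. -/

import Mathlib

theorem geom_pi_aux (m : ℕ) : ∀ (r : Fin m → ℂ), (∀ i, ‖r i‖ < 1) →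
    Summable (fun k : Fin m → ℕ => ‖∏ i, r i ^ k i‖) ∧
    HasSum (fun k : Fin m → ℕ => ∏ i, r i ^ k i) (∏ i, (1 - r i)⁻¹) := by
  induction m with
  | zero =>
    intro r _
    refine ⟨(hasSum_fintype _).summable, ?_⟩
    convert hasSum_fintype (fun k : Fin 0 → ℕ => ∏ i, r i ^ k i) using 1
    simp
  | succ m ih =>
    intro r hr
    obtain ⟨h1, h2⟩ := ih (fun i => r i.succ) (fun i => hr _)
    have g1 : Summable (fun n : ℕ => ‖r 0 ^ n‖) := by
      simp only [norm_pow]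
      exact summable_geometric_of_lt_one (norm_nonneg _) (hr 0)
    have g2 := hasSum_geometric_of_norm_lt_one (hr 0)
    have p1 := g1.mul_norm h1
    have p2 := g2.mul h2 p1.of_norm
    let e : ℕ × (Fin m → ℕ) ≃ (Fin (m + 1) → ℕ) := Fin.consEquiv (fun _ => ℕ)
    constructor
    · rw [← e.summable_iff]
      refine p1.congr fun p => ?_
      simp [e, Fin.prod_univ_succ, Fin.consEquiv]
    · rw [← e.hasSum_iff, Fin.prod_univ_succ]
      have he : (fun k : Fin (m + 1) → ℕ => ∏ i, r i ^ k i) ∘ e =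
          fun p => r 0 ^ p.1 * ∏ i : Fin m, r i.succ ^ p.2 i := by
        funext p
        simp [e, Fin.prod_univ_succ, Fin.consEquiv]
      rw [he]
      exact p2

/-- Multivariate generalized Lambert series for `aₙ = 1` and `z = 1`. -/
theorem multivariate_generalized_lambert_geometric (m : ℕ) (hm : 1 ≤ m)
    (l x y : Fin m → ℂ)
    (hl : ∀ i, ‖l i‖ < 1) (hyx : ∀ i, ‖y i‖ < ‖x i‖) (hx : ‖∏ i, x i‖ < 1) :
    Summable (fun k : Fin m → ℕ =>
      ‖(∏ i, (y i / x i) ^ k i) *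
        (1 / (1 - (∏ i, l i ^ k i) * ∏ i, x i))‖) ∧
    ∑' n : ℕ, ∏ i, x i ^ (n + 1) / (x i - l i ^ n * y i)
      = ∑' k : Fin m → ℕ, (∏ i, (y i / x i) ^ k i) *
          (1 / (1 - (∏ i, l i ^ k i) * ∏ i, x i)) := by
  have hx0 : ∀ i, x i ≠ 0 := fun i => norm_pos_iff.1 ((norm_nonneg _).trans_lt (hyx i))
  have hr : ∀ i, ‖y i / x i‖ < 1 := fun i => by
    rw [norm_div, div_lt_one ((norm_nonneg _).trans_lt (hyx i))]
    exact hyx i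
  have hL : ∀ k : Fin m → ℕ, ‖∏ i, l i ^ k i‖ ≤ 1 := fun k => by
    rw [norm_prod]
    refine Finset.prod_le_one (fun i _ => norm_nonneg _) fun i _ => ?_
    rw [norm_pow]
    exact pow_le_one₀ (norm_nonneg _) (hl i).le
  have hLP : ∀ k : Fin m → ℕ, ‖(∏ i, l i ^ k i) * ∏ i, x i‖ ≤ ‖∏ i, x i‖ := fun k => by
    rw [norm_mul]
    exact mul_le_of_le_one_left (norm_nonneg _) (hL k)
  have s1 := (geom_pi_aux m (fun i => y i / x i) hr).1
  have sF : Summable (fun p : (Fin m → ℕ) × ℕ =>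
      (∏ i, (y i / x i) ^ p.1 i) * ((∏ i, l i ^ p.1 i) * ∏ i, x i) ^ p.2) := by
    have g : Summable (fun n : ℕ => ‖(∏ i, x i) ^ n‖) := by
      simp only [norm_pow]
      exact summable_geometric_of_lt_one (norm_nonneg _) hx
    refine Summable.of_norm_bounded (s1.mul_norm g) fun p => ?_
    rw [norm_mul, norm_mul, norm_pow, norm_pow]
    gcongr
    exact hLP _
  have hk : ∀ k : Fin m → ℕ, ∑' n : ℕ,
      (∏ i, (y i / x i) ^ k i) * ((∏ i, l i ^ k i) * ∏ i, x i) ^ n =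
      (∏ i, (y i / x i) ^ k i) * (1 / (1 - (∏ i, l i ^ k i) * ∏ i, x i)) := fun k => by
    rw [tsum_mul_left, tsum_geometric_of_norm_lt_one ((hLP k).trans_lt hx), one_div]
  have hn : ∀ n : ℕ, ∑' k : Fin m → ℕ,
      (∏ i, (y i / x i) ^ k i) * ((∏ i, l i ^ k i) * ∏ i, x i) ^ n =
      ∏ i, x i ^ (n + 1) / (x i - l i ^ n * y i) := fun n => by
    have hq : ∀ i, ‖y i / x i * l i ^ n‖ < 1 := fun i => by
      rw [norm_mul, norm_pow]
      exact (mul_le_of_le_one_right (norm_nonneg _)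
        (pow_le_one₀ (norm_nonneg _) (hl i).le)).trans_lt (hr i)
    have h := ((geom_pi_aux m (fun i => y i / x i * l i ^ n) hq).2.mul_right
      ((∏ i, x i) ^ n)).tsum_eq
    calc _ = _ := tsum_congr fun k => ?_
      _ = _ := h
      _ = _ := ?_
    · rw [mul_pow, ← mul_assoc, ← Finset.prod_pow, ← Finset.prod_mul_distrib]
      congr 1
      refine Finset.prod_congr rfl fun i _ => ?_
      rw [mul_pow, ← pow_mul, ← pow_mul, mul_comm n]
    · rw [← Finset.prod_pow, ← Finset.prod_mul_distrib]
      refine Finset.prod_congr rfl fun i _ => ?_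
      have e : 1 - y i / x i * l i ^ n = (x i - l i ^ n * y i) / x i := by
        have := hx0 i
        field_simp
      rw [e, inv_div, pow_succ]
      ring
  constructor
  · refine (sF.norm.prod).of_nonneg_of_le (fun k => norm_nonneg _) fun k => ?_
    rw [← hk k]
    exact norm_tsum_le_tsum_norm (sF.norm.prod_factor k)
  · rw [← tsum_congr hn, ← tsum_congr hk]
    exact (Summable.tsum_comm (f := fun (k : Fin m → ℕ) (n : ℕ) =>
      (∏ i, (y i / x i) ^ k i) * ((∏ i, l i ^ k i) * ∏ i, x i) ^ n) sF)
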